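/- Let z1 ≠ z2 be complex numbers, n ≥ 1, and let f : ℂ → ℂ be analytic at z1 and at z2. Let P_n(z) = Σ_{k=0}^{n−1} [a_k(z1,z2)(z−z1) + a_k(z2,z1)(z−z2)]·((z−z1)(z−z2))^k be the two-point Taylor polynomial. Then P_n agrees with f to order n−1 at both points: for every 0 ≤ j ≤ n−1, the j-th derivative of P_n at z1 equals f^{(j)}(z1), and the j-th derivative of P_n at z2 equals f^{(j)}(z2). (That is, P_n is the Hermite interpolation polynomial of f at z1, z2 with data f(z_i), f'(z_i), …, f^{(n−1)}(z_i), i = 1, 2.) -/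

import Mathlib

/-- The two-point Taylor coefficient `a_k(z1, z2)` of `f` at the points `z1, z2`. -/
noncomputable def twoPointCoeff (f : ℂ → ℂ) (z1 z2 : ℂ) (k : ℕ) : ℂ :=
  if k = 0 then f z2 / (z2 - z1)
  else ∑ j ∈ Finset.range (k + 1),
    ((Nat.factorial (k + j - 1) : ℂ) / ((Nat.factorial j : ℂ) * (Nat.factorial (k - j) : ℂ))) *
      (((-1 : ℂ) ^ (k + 1) * (k : ℂ) * iteratedDeriv (k - j) f z2
          + (-1 : ℂ) ^ j * (j : ℂ) * iteratedDeriv (k - j) f z1)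
        / ((Nat.factorial k : ℂ) * (z1 - z2) ^ (k + j + 1)))

open PowerSeries in
lemma tp_const_ne (d : ℂ) (hd : d ≠ 0) : constantCoeff (X + C d : PowerSeries ℂ) ≠ 0 := by
  simpa using hd

open PowerSeries in
lemma tp_inv_mul (d : ℂ) (hd : d ≠ 0) : (X + C d : PowerSeries ℂ)⁻¹ * (X + C d) = 1 :=
  PowerSeries.inv_mul_cancel _ (tp_const_ne d hd)

open PowerSeries in
lemma tp_coeff_inv_pow (d : ℂ) (hd : d ≠ 0) (m : ℕ) :
    ((X + C d : PowerSeries ℂ)⁻¹) ^ (m + 1) =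
      PowerSeries.mk (fun i => (-1 : ℂ) ^ i * ((m + i).choose m : ℂ) * (d⁻¹) ^ (m + 1 + i)) := by
  have hne : (X + C d : PowerSeries ℂ) ≠ 0 := by
    intro h
    have := tp_const_ne d hd
    rw [h] at this
    simp at this
  have hinv := tp_inv_mul d hd
  induction m with
  | zero =>
    apply mul_right_cancel₀ hne
    rw [zero_add, pow_one, hinv]
    ext i
    rw [mul_add, map_add, coeff_mul_C, coeff_mk]
    cases i with
    | zero => simp [hd]
    | succ i =>
      rw [coeff_succ_mul_X, coeff_mk, coeff_one]
      simp
      field_simp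
      ring
  | succ m ih =>
    apply mul_right_cancel₀ hne
    rw [pow_succ, mul_assoc, hinv, mul_one, ih]
    ext i
    rw [mul_add, map_add, coeff_mul_C, coeff_mk, coeff_mk]
    cases i with
    | zero => simp; field_simp; ring
    | succ i =>
      rw [coeff_succ_mul_X, coeff_mk]
      have : ((m + 1 + (i + 1)).choose (m + 1) : ℂ)
          = ((m + (i + 1)).choose m : ℂ) + ((m + 1 + i).choose (m + 1) : ℂ) := by
        have h1 : m + 1 + (i + 1) = (m + 1 + i) + 1 := by ring
        have h2 : m + (i + 1) = m + 1 + i := by ring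
        rw [h1, h2, Nat.choose_succ_succ]
        push_cast; ring
      rw [this]
      have hi : d⁻¹ * d = 1 := inv_mul_cancel₀ hd
      rw [show m + 1 + (i + 1) = m + 1 + 1 + i by ring,
        show m + 1 + 1 + (i + 1) = (m + 1 + 1 + i) + 1 by ring, pow_succ (d⁻¹) (m + 1 + 1 + i)]
      linear_combination (-(-1 : ℂ) ^ (i + 1) * (((m + (i + 1)).choose m : ℂ)
        + ((m + 1 + i).choose (m + 1) : ℂ)) * d⁻¹ ^ (m + 1 + 1 + i)) * hi

/-- residue form of the coefficient (power series data at both points) -/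
noncomputable def tpA (d : ℂ) (F1 F2 : PowerSeries ℂ) (k : ℕ) : ℂ :=
  (PowerSeries.coeff k (PowerSeries.X * F1 * ((PowerSeries.X + PowerSeries.C d)⁻¹) ^ (k + 1))
    + PowerSeries.coeff k (F2 * ((PowerSeries.X + PowerSeries.C (-d))⁻¹) ^ k)) / (-d)

open PowerSeries in
lemma tp_lin1 (d : ℂ) (hd : d ≠ 0) (k : ℕ) :
    coeff (k + 1) (X * X * ((X + C d : PowerSeries ℂ)⁻¹) ^ (k + 2))
      + coeff (k + 1) (((X + C (-d) : PowerSeries ℂ)⁻¹) ^ k) = 0 := by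
  have hd' : -d ≠ 0 := neg_ne_zero.mpr hd
  rw [mul_assoc, coeff_succ_X_mul]
  cases k with
  | zero => simp [coeff_one]
  | succ k =>
    rw [coeff_succ_X_mul, tp_coeff_inv_pow d hd, tp_coeff_inv_pow (-d) hd', coeff_mk, coeff_mk]
    have : (k + 1 + 1 + k).choose (k + 1 + 1) = (k + (k + 1 + 1)).choose k := by
      rw [show k + 1 + 1 + k = k + (k + 1 + 1) by ring]
      exact (Nat.choose_symm_add).symm
    rw [this, inv_neg, neg_pow (d⁻¹)]
    rw [show k + 1 + (k + 1 + 1) = 2 * (k + 1) + 1 by ring, show k + 1 + 1 + 1 + k = 2 * (k + 1) + 1 by ring]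
    simp only [pow_succ _ (2 * (k + 1)), pow_mul (-1 : ℂ) 2, pow_succ (-1 : ℂ) (k + 1), pow_succ (-1 : ℂ) k]
    norm_num

open PowerSeries in
lemma tp_lin2 (d : ℂ) (hd : d ≠ 0) (k : ℕ) :
    coeff (k + 1) (X * ((X + C d : PowerSeries ℂ)⁻¹) ^ (k + 1))
      + coeff (k + 1) (X * ((X + C (-d) : PowerSeries ℂ)⁻¹) ^ (k + 1)) = 0 := by
  have hd' : -d ≠ 0 := neg_ne_zero.mpr hd
  rw [coeff_succ_X_mul, coeff_succ_X_mul, tp_coeff_inv_pow d hd, tp_coeff_inv_pow (-d) hd',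
    coeff_mk, coeff_mk, inv_neg, neg_pow (d⁻¹), show k + 1 + k = 2 * k + 1 by ring]
  simp only [pow_succ (-1 : ℂ) (2 * k), pow_mul (-1 : ℂ) 2]
  norm_num

open PowerSeries in
lemma tpA_succ (d : ℂ) (hd : d ≠ 0) (α β : ℂ) (F1 F2 G1 G2 : PowerSeries ℂ)
    (h1 : F1 = C α * X + C β * (X + C d) + X * (X + C d) * G1)
    (h2 : F2 = C α * (X + C (-d)) + C β * X + X * (X + C (-d)) * G2) (k : ℕ) :
    tpA d F1 F2 (k + 1) = tpA d G1 G2 k := by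
  have hd' : -d ≠ 0 := neg_ne_zero.mpr hd
  have i1 := tp_inv_mul d hd
  have i2 := tp_inv_mul (-d) hd'
  unfold tpA
  congr 1
  have e1 := tp_lin1 d hd k
  have e2 := tp_lin2 d hd k
  set I := (X + C d : PowerSeries ℂ)⁻¹
  set J := (X + C (-d) : PowerSeries ℂ)⁻¹
  have t1 : X * F1 * I ^ (k + 1 + 1) = C α * (X * X * I ^ (k + 2)) + C β * (X * I ^ (k + 1))
      + X * (X * G1 * I ^ (k + 1)) := by
    rw [h1]
    linear_combination (C β * X * I ^ (k + 1) + X * X * G1 * I ^ (k + 1)) * i1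
  have t2 : F2 * J ^ (k + 1) = C α * J ^ k + C β * (X * J ^ (k + 1)) + X * (G2 * J ^ k) := by
    rw [h2]
    linear_combination (C α * J ^ k + X * G2 * J ^ k) * i2
  rw [t1, t2]
  simp only [map_add, coeff_C_mul]
  rw [coeff_succ_X_mul k (X * G1 * I ^ (k + 1)), coeff_succ_X_mul k (G2 * J ^ k)]
  linear_combination α * e1 + β * e2

open PowerSeries in
lemma tp_exists_quot (d : ℂ) (hd : d ≠ 0) (F : PowerSeries ℂ) (h : constantCoeff F = 0) :
    ∃ G, F = X * (X + C d) * G := by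
  obtain ⟨G, hG⟩ := X_dvd_iff.mpr h
  refine ⟨(X + C d)⁻¹ * G, ?_⟩
  linear_combination hG - X * G * tp_inv_mul d hd

open PowerSeries in
lemma tp_main (d : ℂ) (hd : d ≠ 0) (n : ℕ) : ∀ F1 F2 : PowerSeries ℂ,
    (X : PowerSeries ℂ) ^ n ∣ F1 - ∑ k ∈ Finset.range n,
      (C (tpA d F1 F2 k) * X + C (tpA (-d) F2 F1 k) * (X + C d)) * (X * (X + C d)) ^ k := by
  have hd' : -d ≠ 0 := neg_ne_zero.mpr hd
  induction n with
  | zero => intro F1 F2; simp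
  | succ n ih =>
    intro F1 F2
    have a0 : tpA d F1 F2 0 = constantCoeff F2 / (-d) := by simp [tpA]
    have b0 : tpA (-d) F2 F1 0 = constantCoeff F1 / d := by simp [tpA]
    obtain ⟨G1, hG1⟩ := tp_exists_quot d hd
      (F1 - (C (tpA d F1 F2 0) * X + C (tpA (-d) F2 F1 0) * (X + C d)))
      (by simp [b0, hd])
    obtain ⟨G2, hG2⟩ := tp_exists_quot (-d) hd'
      (F2 - (C (tpA d F1 F2 0) * (X + C (-d)) + C (tpA (-d) F2 F1 0) * X))
      (by simp [a0]; field_simp; ring)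
    have hA : ∀ k, tpA d F1 F2 (k + 1) = tpA d G1 G2 k :=
      tpA_succ d hd (tpA d F1 F2 0) (tpA (-d) F2 F1 0) F1 F2 G1 G2 (by linear_combination hG1) (by linear_combination hG2)
    have hB : ∀ k, tpA (-d) F2 F1 (k + 1) = tpA (-d) G2 G1 k :=
      tpA_succ (-d) hd' (tpA (-d) F2 F1 0) (tpA d F1 F2 0) F2 F1 G2 G1
        (by linear_combination hG2) (by rw [neg_neg]; linear_combination hG1)
    obtain ⟨Q, hQ⟩ := ih G1 G2
    refine ⟨(X + C d) * Q, ?_⟩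
    rw [Finset.sum_range_succ']
    simp only [hA, hB]
    have : ∑ k ∈ Finset.range n, (C (tpA d G1 G2 k) * X + C (tpA (-d) G2 G1 k) * (X + C d))
          * (X * (X + C d)) ^ (k + 1)
        = X * (X + C d) * ∑ k ∈ Finset.range n,
          (C (tpA d G1 G2 k) * X + C (tpA (-d) G2 G1 k) * (X + C d)) * (X * (X + C d)) ^ k := by
      rw [Finset.mul_sum]
      refine Finset.sum_congr rfl fun k _ => ?_
      ring
    rw [this]
    linear_combination hG1 + X * (X + C d) * hQ

/-- Taylor series -/
noncomputable def tpT (f : ℂ → ℂ) (z : ℂ) : PowerSeries ℂ :=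
  PowerSeries.mk fun i => iteratedDeriv i f z / (Nat.factorial i : ℂ)

open PowerSeries in
lemma tp_coeff_eq (f : ℂ → ℂ) (z1 z2 : ℂ) (h : z1 ≠ z2) (k : ℕ) :
    twoPointCoeff f z1 z2 k = tpA (z1 - z2) (tpT f z1) (tpT f z2) k := by
  have hd : z1 - z2 ≠ 0 := sub_ne_zero.mpr h
  have hd' : -(z1 - z2) ≠ 0 := neg_ne_zero.mpr hd
  cases k with
  | zero => simp [twoPointCoeff, tpA, tpT]
  | succ k =>
    unfold twoPointCoeff tpA
    rw [if_neg (Nat.succ_ne_zero k)]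
    generalize z1 - z2 = d at *
    rw [show X * tpT f z1 * ((X + C d)⁻¹) ^ (k + 1 + 1)
      = (X * ((X + C d)⁻¹) ^ (k + 1 + 1)) * tpT f z1 by ring, mul_comm (tpT f z2),
      coeff_mul, coeff_mul, tp_coeff_inv_pow d hd, tp_coeff_inv_pow (-d) hd',
      Finset.Nat.sum_antidiagonal_eq_sum_range_succ_mk,
      Finset.Nat.sum_antidiagonal_eq_sum_range_succ_mk, ← Finset.sum_add_distrib, Finset.sum_div]
    refine Finset.sum_congr rfl fun j _ => ?_
    simp only [tpT, coeff_mk]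
    have hf : ∀ m : ℕ, (Nat.factorial m : ℂ) ≠ 0 := fun m => by
      exact_mod_cast Nat.factorial_ne_zero m
    have c1 : ((k + j).choose k : ℂ) = (k + j).factorial / (k.factorial * j.factorial) := by
      rw [Nat.cast_add_choose]
    have n1 := hf k
    have n2 := hf j
    have n3 := hf (k + 1 - j)
    have kk : (k : ℂ) + 1 ≠ 0 := by exact_mod_cast Nat.succ_ne_zero k
    have P2 : (-d)⁻¹ ^ (k + 1 + j) = (-1) ^ (k + 1 + j) * d⁻¹ ^ (k + 1 + j) := by
      rw [inv_neg, neg_pow]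
    have sg : (-1 : ℂ) ^ j * (-1) ^ (k + 1 + j) = (-1) ^ (k + 1) := by
      rw [pow_add _ (k+1) j, mul_left_comm, ← mul_pow]; norm_num
    have s2 : (-1 : ℂ) ^ (k + 1 + 1) = - (-1) ^ (k + 1) := by ring
    rw [c1, P2, show k + 1 + j - 1 = k + j by omega, Nat.factorial_succ, s2, ← sg]
    generalize (-1 : ℂ) ^ (k + 1 + j) = s
    cases j with
    | zero =>
      simp
      field_simp
      ring
    | succ j =>
      rw [coeff_succ_X_mul, coeff_mk]
      have c2 : ((k + 1 + j).choose (k + 1) : ℂ)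
          = (k + 1 + j).factorial / ((k + 1).factorial * j.factorial) := by
        rw [Nat.cast_add_choose]
      have n4 := hf j
      have jj : (j : ℂ) + 1 ≠ 0 := by exact_mod_cast Nat.succ_ne_zero j
      rw [c2, show k + 1 + j = k + (j + 1) by ring, Nat.factorial_succ k, Nat.factorial_succ j]
      rw [show k + 1 + 1 + j = k + 1 + (j + 1) by ring, inv_pow, pow_succ d (k + 1 + (j + 1))]
      have hD : d ^ (k + 1 + (j + 1)) ≠ 0 := pow_ne_zero _ hd
      generalize d ^ (k + 1 + (j + 1)) = D at hD ⊢
      push_cast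
      field_simp
      ring

lemma tp_iter_poly (p : Polynomial ℂ) (z : ℂ) (j : ℕ) :
    iteratedDeriv j (fun w => p.eval w) z = (Nat.factorial j : ℂ) * (Polynomial.taylor z p).coeff j := by
  have : iteratedDeriv j (fun w => p.eval w) = fun w => (Polynomial.derivative^[j] p).eval w := by
    induction j with
    | zero => simp
    | succ j ih =>
      rw [iteratedDeriv_succ, ih, Function.iterate_succ_apply']
      ext w
      exact Polynomial.deriv _
  rw [this, Polynomial.taylor_coeff, ← Polynomial.factorial_smul_hasseDeriv]
  simp

lemma tp_one_side (z1 z2 : ℂ) (h12 : z1 ≠ z2) (n : ℕ) (f : ℂ → ℂ) (j : ℕ) (hj : j < n) :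
    iteratedDeriv j (fun z : ℂ => ∑ k ∈ Finset.range n,
          (twoPointCoeff f z1 z2 k * (z - z1) + twoPointCoeff f z2 z1 k * (z - z2)) *
            ((z - z1) * (z - z2)) ^ k) z1 = iteratedDeriv j f z1 := by
  have hd : z1 - z2 ≠ 0 := sub_ne_zero.mpr h12
  let p : Polynomial ℂ := ∑ k ∈ Finset.range n,
    (Polynomial.C (twoPointCoeff f z1 z2 k) * (Polynomial.X - Polynomial.C z1)
      + Polynomial.C (twoPointCoeff f z2 z1 k) * (Polynomial.X - Polynomial.C z2)) *
      ((Polynomial.X - Polynomial.C z1) * (Polynomial.X - Polynomial.C z2)) ^ k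
  have hp : (fun z : ℂ => ∑ k ∈ Finset.range n,
          (twoPointCoeff f z1 z2 k * (z - z1) + twoPointCoeff f z2 z1 k * (z - z2)) *
            ((z - z1) * (z - z2)) ^ k) = fun z => p.eval z := by
    ext z
    simp [p, Polynomial.eval_finsetSum]
  rw [hp, tp_iter_poly]
  have hm := tp_main (z1 - z2) hd n (tpT f z1) (tpT f z2)
  rw [PowerSeries.X_pow_dvd_iff] at hm
  have hmj := hm j hj
  have hq : ((Polynomial.taylor z1 p : Polynomial ℂ) : PowerSeries ℂ)
      = ∑ k ∈ Finset.range n,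
      (PowerSeries.C (tpA (z1 - z2) (tpT f z1) (tpT f z2) k) * PowerSeries.X
        + PowerSeries.C (tpA (-(z1 - z2)) (tpT f z2) (tpT f z1) k)
          * (PowerSeries.X + PowerSeries.C (z1 - z2)))
        * (PowerSeries.X * (PowerSeries.X + PowerSeries.C (z1 - z2))) ^ k := by
    rw [← Polynomial.coeToPowerSeries.ringHom_apply]
    simp only [p, map_sum]
    refine Finset.sum_congr rfl fun k _ => ?_
    rw [← tp_coeff_eq f z1 z2 h12, neg_sub, ← tp_coeff_eq f z2 z1 h12.symm]
    simp only [Polynomial.taylor_mul, Polynomial.taylor_pow, map_add, map_sub, map_mul, map_pow,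
      Polynomial.taylor_X, Polynomial.taylor_C, Polynomial.coeToPowerSeries.ringHom_apply,
      Polynomial.coe_C, Polynomial.coe_X]
    ring
  rw [← hq, map_sub, sub_eq_zero, Polynomial.coeff_coe] at hmj
  rw [← hmj, tpT, PowerSeries.coeff_mk]
  have : (Nat.factorial j : ℂ) ≠ 0 := by exact_mod_cast Nat.factorial_ne_zero j
  field_simp

/-- The two-point Taylor polynomial of degree `2n−1` is the Hermite interpolation
polynomial: it agrees with `f` to order `n−1` at both `z1` and `z2`. -/
theorem twoPointTaylorPolynomial_hermite
    (z1 z2 : ℂ) (h12 : z1 ≠ z2) (n : ℕ) (hn : 1 ≤ n) (f : ℂ → ℂ)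
    (hf1 : AnalyticAt ℂ f z1) (hf2 : AnalyticAt ℂ f z2) :
    ∀ j : ℕ, j ≤ n - 1 →
      iteratedDeriv j (fun z : ℂ => ∑ k ∈ Finset.range n,
          (twoPointCoeff f z1 z2 k * (z - z1) + twoPointCoeff f z2 z1 k * (z - z2)) *
            ((z - z1) * (z - z2)) ^ k) z1 = iteratedDeriv j f z1 ∧
      iteratedDeriv j (fun z : ℂ => ∑ k ∈ Finset.range n,
          (twoPointCoeff f z1 z2 k * (z - z1) + twoPointCoeff f z2 z1 k * (z - z2)) *
            ((z - z1) * (z - z2)) ^ k) z2 = iteratedDeriv j f z2 := by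
  intro j hj
  have hj' : j < n := by omega
  refine ⟨tp_one_side z1 z2 h12 n f j hj', ?_⟩
  rw [← tp_one_side z2 z1 h12.symm n f j hj']
  congr 1
  ext z
  refine Finset.sum_congr rfl fun k _ => ?_
  ring
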